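/- arXiv:1810.12433 — 2 statements merged into one kernel-verified Lean document; each statement's English description precedes it below -/
import Mathlib

section
/- For every 0 < ε < 10^{-6} there exists C > 0 such that, whenever C log n / n ≤ p ≤ 1/25, the binomial random graph G_{n,p} asymptotically almost surely is NOT (ε, ⌈(3p)^{-1}⌉/n)-Chvátal-resilient with respect to containing an optimal matching; that is, a.a.s. there exists a subgraph H ∈ H^{ε,γ}_{n,p}(G_{n,p}) with γ = ⌈(3p)^{-1}⌉/n such that G_{n,p} ∖ H contains no matching of size ⌊n/2⌋. -/
/-!
If `B` is a set of `⌊n/2⌋ - 1` vertices and `H` consists of the edges of `G` avoiding `B`, then `B`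
covers every edge of `G \ H`, so `G \ H` has no optimal matching. It remains to choose `B` so that
`H` is of shifted Chvátal type.

Put `s = ⌈(3p)⁻¹⌉` and fix a set `A` of about `0.95 n` vertices. A.a.s. every vertex has at most
`0.98 np` neighbours in `A`, so `A` contains an independent set `I` of size `s + 2`, found greedily.
Since `p ≤ 1 / 25`, up to lower order terms `|V \ A| + 0.98 np (s + 2)` is at most
`(0.05 + 0.98 / 3 + 3 * 0.98 / 25) n < n / 2`, so there is a set `B` as above, disjoint from `I`,
which contains `V \ A` and the whole neighbourhood of `I`. All degrees in `H` are at most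
`0.98 np ≤ (1 - 2ε) np`, which is the first Chvátal alternative for `i ≤ εn`. The vertices
of `B ∪ I` are isolated in `H`; there are enough of them to make `v_{n-i-s}` isolated for every
`i < n / 2`, which is the second alternative for `i > εn`. Thus `I` is what pays for the shift.
-/

open Filter Real

namespace Resilience

variable {V : Type*}

/-- The degree of a vertex, as the cardinality of its neighbourhood. -/
noncomputable def deg (G : SimpleGraph V) (v : V) : ℕ := (G.neighborSet v).ncard

/-- The neighbourhood of a set of vertices: all vertices with a neighbour in `X`. -/
def nbhd (G : SimpleGraph V) (X : Set V) : Set V := {v | ∃ x ∈ X, G.Adj v x}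

/-- The minimum degree over a set of vertices. -/
noncomputable def minDeg (G : SimpleGraph V) (X : Set V) : ℕ :=
  sInf ((fun v => deg G v) '' X)

/-- The number of edges of `G` with one endpoint in `X` and the other in `Y`. -/
noncomputable def eBetween (G : SimpleGraph V) (X Y : Set V) : ℕ :=
  {e ∈ G.edgeSet | ∃ x ∈ X, ∃ y ∈ Y, e = s(x, y)}.ncard

/-- The number of edges of `G` with both endpoints in `A`. -/
noncomputable def eIn (G : SimpleGraph V) (A : Set V) : ℕ :=
  {e ∈ G.edgeSet | ∀ v ∈ e, v ∈ A}.ncard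

/-- The graph on `V` whose edges are the consecutive pairs of the list `l`;
this lets us view a path, recorded as a list of distinct vertices, as a graph. -/
def listGraph (l : List V) : SimpleGraph V :=
  SimpleGraph.fromEdgeSet {e | ∃ q ∈ l.zip l.tail, e = s(q.1, q.2)}

/-- `l` is a (nonempty) path on `V` all of whose edges lie in `G`. -/
def IsPathOn (G : SimpleGraph V) (l : List V) : Prop :=
  l ≠ [] ∧ l.Nodup ∧ l.Chain' G.Adj

/-- `l` is a longest path with all edges in `G`. -/
def IsLongestPathOn (G : SimpleGraph V) (l : List V) : Prop :=
  IsPathOn G l ∧ ∀ l' : List V, IsPathOn G l' → l'.length ≤ l.length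

/-- `l'` is obtained from the path `l` (with fixed last endpoint) by a single rotation
within `G`, whose broken edge lies on the original path `P`.  Writing
`l = a :: t₁ ++ c :: b :: t₂`, the pivot is `b`, the new edge is `ab ∈ G`, the broken
edge is `cb` (an edge of `P`), and the rotated path is `(a :: t₁ ++ [c]).reverse ++ b :: t₂`. -/
def IsRotation (G : SimpleGraph V) (P l l' : List V) : Prop :=
  ∃ (a c b : V) (t₁ t₂ : List V),
    l = a :: t₁ ++ c :: b :: t₂ ∧ G.Adj a b ∧ (listGraph P).Adj c b ∧
    l' = (a :: t₁ ++ [c]).reverse ++ b :: t₂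

/-- The set of paths obtainable from `P` by at most `t` successive rotations within `G`
with fixed last endpoint, all broken edges lying on `P`. -/
def rotSet (G : SimpleGraph V) (P : List V) : ℕ → Set (List V)
  | 0 => {P}
  | t + 1 => rotSet G P t ∪ {l' | ∃ l ∈ rotSet G P t, IsRotation G P l l'}

/-- `R^t_{G,P,u}`: the set of endpoints of paths obtainable from `P` by at most `t`
successive rotations within `G` with fixed last endpoint. -/
def Rset (G : SimpleGraph V) (P : List V) (t : ℕ) : Set V :=
  {x | ∃ l ∈ rotSet G P t, l.head? = some x}

/-- The family `H^ε_{n,p}` of Pósa-type subgraphs: there is an ordering of the vertices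
with non-increasing degrees such that `d_H(v_i) ≤ (n-i)p - εnp` for all `i < n/2`
(1-based indexing). -/
def PosaFamily (n : ℕ) (p ε : ℝ) (H : SimpleGraph (Fin n)) : Prop :=
  ∃ v : Fin n → Fin n, Function.Bijective v ∧
    (∀ i j : Fin n, i ≤ j → deg H (v j) ≤ deg H (v i)) ∧
    ∀ i : Fin n, ((i.1 : ℝ) + 1) < n / 2 →
      (deg H (v i) : ℝ) ≤ ((n : ℝ) - ((i.1 : ℝ) + 1)) * p - ε * n * p

/-- The family `H^{ε,δ}_{n,p}` of (shifted) Chvátal-type subgraphs, where the shift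
`δn` is recorded as a natural number `s`: there is an ordering of the vertices with
non-increasing degrees such that for all `i < n/2` (1-based indexing), either
`d_H(v_i) ≤ (n-i)p - εnp` or `d_H(v_{n-i-s}) ≤ ip - εnp`. -/
def ChvatalFamily (n : ℕ) (p ε : ℝ) (s : ℕ) (H : SimpleGraph (Fin n)) : Prop :=
  ∃ v : Fin n → Fin n, Function.Bijective v ∧
    (∀ i j : Fin n, i ≤ j → deg H (v j) ≤ deg H (v i)) ∧
    ∀ i : Fin n, ((i.1 : ℝ) + 1) < n / 2 →
      ((deg H (v i) : ℝ) ≤ ((n : ℝ) - ((i.1 : ℝ) + 1)) * p - ε * n * p ∨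
       (deg H (v ⟨n - (i.1 + 1) - s - 1, by have := i.2; omega⟩) : ℝ) ≤
         ((i.1 : ℝ) + 1) * p - ε * n * p)

/-- The probability weight of a fixed graph `G` in the binomial random graph `G_{n,p}`. -/
noncomputable def weight (n : ℕ) (p : ℝ) (G : SimpleGraph (Fin n)) : ℝ :=
  p ^ G.edgeSet.ncard * (1 - p) ^ (n.choose 2 - G.edgeSet.ncard)

open Classical in
/-- The probability that the binomial random graph `G_{n,p}` satisfies the property `Q`. -/
noncomputable def Pr (n : ℕ) (p : ℝ) (Q : SimpleGraph (Fin n) → Prop) : ℝ :=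
  ∑ G : SimpleGraph (Fin n), if Q G then weight n p G else 0

/-- Property `RE(δ)` for a (connected) graph `G` on `n` vertices: for every path `P`
on the vertex set, either `G ∪ P` has a longer path, or there are at least `δn` vertices
`v`, each with a set `T v` of at least `δn` vertices `w`, such that `G ∪ P` has a path
from `v` to `w` with the same vertex set as `P`. -/
def RE (n : ℕ) (δ : ℝ) (G : SimpleGraph (Fin n)) : Prop :=
  G.Connected ∧
  ∀ P : List (Fin n), P ≠ [] → P.Nodup →
    (∃ Q : List (Fin n), IsPathOn (G ⊔ listGraph P) Q ∧ P.length < Q.length) ∨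
    (∃ S : Set (Fin n), δ * n ≤ S.ncard ∧
      ∃ T : Fin n → Set (Fin n), (∀ v ∈ S, δ * n ≤ (T v).ncard) ∧
        ∀ v ∈ S, ∀ w ∈ T v, ∃ Q : List (Fin n),
          IsPathOn (G ⊔ listGraph P) Q ∧ Q.head? = some v ∧ Q.getLast? = some w ∧
          Q.toFinset = P.toFinset)

/-- `G₂` complements `G₁` (with respect to parameter `δ` as in `RE(δ)`): for every path
`P` on the vertex set, either `G₁ ∪ P` has a longer path, or there are sets `S`, `T v`
as in the definition of `RE(δ)` together with `v ∈ S` and `w ∈ T v` such that `vw` is an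
edge of `G₁ ∪ G₂`. -/
def Complements (n : ℕ) (δ : ℝ) (G₁ G₂ : SimpleGraph (Fin n)) : Prop :=
  ∀ P : List (Fin n), P ≠ [] → P.Nodup →
    (∃ Q : List (Fin n), IsPathOn (G₁ ⊔ listGraph P) Q ∧ P.length < Q.length) ∨
    (∃ S : Set (Fin n), δ * n ≤ S.ncard ∧
      ∃ T : Fin n → Set (Fin n), (∀ v ∈ S, δ * n ≤ (T v).ncard) ∧
        (∀ v ∈ S, ∀ w ∈ T v, ∃ Q : List (Fin n),
          IsPathOn (G₁ ⊔ listGraph P) Q ∧ Q.head? = some v ∧ Q.getLast? = some w ∧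
          Q.toFinset = P.toFinset) ∧
        ∃ v ∈ S, ∃ w ∈ T v, (G₁ ⊔ G₂).Adj v w)

section Construction

open Finset

variable {G : SimpleGraph V} {A : Finset V} {D k : ℕ}

/-- A matching is optimal if it has `⌊n/2⌋` edges, where `n` is the number of vertices. -/
def HasOptimalMatching [Fintype V] (G : SimpleGraph V) : Prop :=
  ∃ M : G.Subgraph, M.IsMatching ∧ M.edgeSet.ncard = Fintype.card V / 2

/-- `(ε, δ)`-Chvátal-resilience with respect to `P`, the shift `s` standing for `δn`. -/
def ChvatalResilient (n : ℕ) (p ε : ℝ) (s : ℕ) (P : SimpleGraph (Fin n) → Prop)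
    (G : SimpleGraph (Fin n)) : Prop :=
  ∀ H ≤ G, ChvatalFamily n p ε s H → P (G \ H)

open Classical in
/-- The degree of `v` into `A`: the number of neighbours of `v` in `A`, where `v` itself may or may
not belong to `A`. -/
noncomputable def degInto (G : SimpleGraph V) (A : Finset V) (v : V) : ℕ := #{u ∈ A | G.Adj v u}

lemma exists_isIndepSet_card_eq (hD : ∀ v ∈ A, degInto G A v ≤ D) (hk : k * (D + 1) ≤ #A) :
    ∃ I ⊆ A, #I = k ∧ G.IsIndepSet I := by
  classical
  induction k with
  | zero => exact ⟨∅, by simp⟩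
  | succ k ih =>
    obtain ⟨I, hIA, rfl, hI⟩ := ih (by lia)
    have hexcluded : #(I.biUnion fun x ↦ insert x {u ∈ A | G.Adj x u}) ≤ #I * (D + 1) :=
      card_biUnion_le_card_mul _ _ _ fun x hx ↦
        (card_insert_le _ _).trans (Nat.add_le_add_right (hD x (hIA hx)) 1)
    obtain ⟨y, hyA, hy⟩ := exists_mem_notMem_of_card_lt_card
      (hexcluded.trans_lt (by lia : #I * (D + 1) < #A))
    simp only [mem_biUnion, mem_insert, mem_filter, not_exists, not_and, not_or] at hy
    refine ⟨insert y I, insert_subset hyA hIA,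
      card_insert_of_notMem fun h ↦ (hy y h).1 rfl, ?_⟩
    rw [coe_insert, SimpleGraph.isIndepSet_iff]
    exact hI.insert fun x hx _ ↦ ⟨fun h ↦ (hy x hx).2 hyA h.symm, (hy x hx).2 hyA⟩

lemma exists_disjoint_neighborSet_subset [Fintype V] [DecidableEq V] {m : ℕ}
    (hD : ∀ v ∈ A, degInto G A v ≤ D) (hm : #Aᶜ + k * D ≤ m) (hkm : m + k ≤ Fintype.card V) :
    ∃ I B : Finset V, Disjoint I B ∧ #I = k ∧ #B = m ∧ Aᶜ ⊆ B ∧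
      ∀ x ∈ I, G.neighborSet x ⊆ B := by
  classical
  have hcompl := card_compl_add_card A
  obtain ⟨I, hIA, rfl, hI⟩ := exists_isIndepSet_card_eq (k := k) hD (by lia)
  let N : Finset V := I.biUnion fun x ↦ {u ∈ A | G.Adj x u}
  have hN : #N ≤ #I * D := card_biUnion_le_card_mul _ _ _ fun x hx ↦ hD x (hIA hx)
  have hNI : Aᶜ ∪ N ⊆ Iᶜ := by
    refine union_subset (compl_subset_compl.2 hIA) fun u hu ↦ ?_
    obtain ⟨x, hx, hxu⟩ := mem_biUnion.1 hu
    have hadj := (mem_filter.1 hxu).2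
    exact mem_compl.2 fun huI ↦ hI hx huI hadj.ne hadj
  obtain ⟨B, hNB, hBI, hB⟩ := exists_subsuperset_card_eq (n := m) hNI
    ((card_union_le _ _).trans (by lia)) (by rw [card_compl]; lia)
  refine ⟨I, B, subset_compl_iff_disjoint_left.1 hBI, rfl, hB,
    subset_union_left.trans hNB, fun x hx u hu ↦ hNB ?_⟩
  by_cases huA : u ∈ A
  · exact mem_union_right _ (mem_biUnion.2 ⟨x, hx, mem_filter.2 ⟨huA, hu⟩⟩)
  · exact mem_union_left _ (mem_compl.2 huA)

lemma encard_edgeSet_le_of_isVertexCover {c : Set V} (hc : G.IsVertexCover c) {M : G.Subgraph}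
    (hM : M.IsMatching) : M.edgeSet.encard ≤ c.encard := by
  let f (v : M.verts) : Sym2 V := hM.toEdge v
  have hcover : M.edgeSet ⊆ f '' (Subtype.val ⁻¹' c) := by
    rintro ⟨v, w⟩ (h : M.Adj v w)
    have hv := congrArg Subtype.val (hM.toEdge_eq_of_adj h)
    rcases hc (M.adj_sub h) with hvc | hwc
    · exact ⟨⟨v, h.fst_mem⟩, hvc, hv⟩
    · have hw := congrArg Subtype.val (hM.toEdge_eq_toEdge_of_adj h)
      exact ⟨⟨w, h.snd_mem⟩, hwc, hw.symm.trans hv⟩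
  calc M.edgeSet.encard
      ≤ (f '' (Subtype.val ⁻¹' c)).encard := Set.encard_le_encard hcover
    _ ≤ (Subtype.val ⁻¹' c : Set M.verts).encard := Set.encard_image_le _ _
    _ ≤ c.encard := Set.encard_preimage_val_le_encard_right _ _

lemma not_hasOptimalMatching_of_isVertexCover [Fintype V] {B : Finset V}
    (hB : G.IsVertexCover B) (hcard : #B < Fintype.card V / 2) : ¬ HasOptimalMatching G := by
  rintro ⟨M, hM, hMcard⟩
  have hle := encard_edgeSet_le_of_isVertexCover hB hM
  rw [← (Set.toFinite _).cast_ncard_eq, hMcard, Set.encard_coe_eq_coe_finsetCard] at hle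
  exact hcard.not_ge (by exact_mod_cast hle)

lemma spanningCoe_induce_adj {s : Set V} {u v : V} :
    (G.induce s).spanningCoe.Adj u v ↔ G.Adj u v ∧ u ∈ s ∧ v ∈ s := by
  simp

lemma isVertexCover_sdiff_spanningCoe_induce_compl (G : SimpleGraph V) (B : Set V) :
    (G \ (G.induce Bᶜ).spanningCoe).IsVertexCover B := by
  intro u v h
  rw [SimpleGraph.sdiff_adj, spanningCoe_induce_adj] at h
  simp only [Set.mem_compl_iff] at h
  tauto

lemma deg_spanningCoe_induce_le_degInto {s : Set V} (hs : s ⊆ A) (v : V) :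
    deg (G.induce s).spanningCoe v ≤ degInto G A v := by
  rw [deg, degInto, ← Set.ncard_coe_finset]
  refine Set.ncard_le_ncard (fun u hu ↦ ?_) (finite_toSet _)
  obtain ⟨hadj, -, hu⟩ := spanningCoe_induce_adj.1 hu
  simpa using ⟨hs hu, hadj⟩

lemma deg_spanningCoe_induce_eq_zero {s : Set V} {v : V}
    (h : v ∉ s ∨ Disjoint (G.neighborSet v) s) : deg (G.induce s).spanningCoe v = 0 := by
  have hempty : (G.induce s).spanningCoe.neighborSet v = ∅ := by
    refine Set.eq_empty_of_forall_notMem fun u hu ↦ ?_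
    obtain ⟨hadj, hv, hu⟩ := spanningCoe_induce_adj.1 hu
    exact h.elim (· hv) fun hdisj ↦ Set.disjoint_left.1 hdisj hadj hu
  rw [deg, hempty, Set.ncard_empty]

end Construction

section ShiftedChvatal

open Finset

variable {n : ℕ} {p ε : ℝ} {s : ℕ}

lemma antitone_apply_le_of_le_add_card {α : Type*} [Preorder α] {f : Fin n → α}
    (hf : Antitone f) {c : α} {Z : Finset (Fin n)} (hZ : ∀ i ∈ Z, f i ≤ c) {j : Fin n}
    (hj : n ≤ j + #Z) : f j ≤ c := by
  obtain ⟨i, hi, hij⟩ : ∃ i ∈ Z, i ≤ j := by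
    by_contra! h
    have hcard : #Z ≤ #(Ioi j) := card_le_card fun i hi ↦ mem_Ioi.2 (h i hi)
    rw [Fin.card_Ioi] at hcard
    lia
  exact (hf hij).trans (hZ i hi)

lemma exists_perm_antitone_comp {α : Type*} [LinearOrder α] (f : Fin n → α) :
    ∃ σ : Equiv.Perm (Fin n), Antitone (f ∘ σ) :=
  ⟨Tuple.sort (OrderDual.toDual ∘ f), fun _ _ hij ↦ Tuple.monotone_sort (OrderDual.toDual ∘ f) hij⟩

lemma chvatalFamily_of_deg_eq_zero (hp : 0 ≤ p) {H : SimpleGraph (Fin n)}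
    (hdeg : ∀ v, (deg H v : ℝ) ≤ (1 - 2 * ε) * (n * p)) {Z : Finset (Fin n)}
    (hZ : ∀ v ∈ Z, deg H v = 0) (hcard : n / 2 + s + 1 ≤ #Z) : ChvatalFamily n p ε s H := by
  obtain ⟨σ, hσ⟩ := exists_perm_antitone_comp (deg H)
  refine ⟨σ, σ.bijective, fun i j hij ↦ hσ hij, fun i hi ↦ ?_⟩
  rcases le_or_gt ((i : ℝ) + 1) (ε * n) with hsmall | hlarge
  · left
    nlinarith [hdeg (σ i), mul_le_mul_of_nonneg_right hsmall hp]
  · right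
    have hi' : 2 * (i.1 + 1) < n := by
      have : 2 * ((i : ℝ) + 1) < n := by linarith
      exact_mod_cast this
    have hZn : #Z ≤ n := card_finset_fin_le Z
    have hzero : deg H (σ ⟨n - (i.1 + 1) - s - 1, by lia⟩) ≤ 0 :=
      antitone_apply_le_of_le_add_card hσ (Z := Z.map σ.symm.toEmbedding)
        (by simpa using fun i (hi : σ i ∈ Z) ↦ hZ _ hi) (by rw [card_map]; simp only; lia)
    rw [Nat.le_zero.1 hzero, Nat.cast_zero]
    nlinarith [mul_le_mul_of_nonneg_right hlarge.le hp]

lemma not_chvatalResilient_of_degInto_le {G : SimpleGraph (Fin n)} {A : Finset (Fin n)} {D : ℕ}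
    (hp : 0 ≤ p) (hD : ∀ v, degInto G A v ≤ D) (hDε : (D : ℝ) ≤ (1 - 2 * ε) * (n * p))
    (hroom : #Aᶜ + (s + 2) * (D + 1) + 1 ≤ n / 2) :
    ¬ ChvatalResilient n p ε s HasOptimalMatching G := by
  intro hres
  obtain ⟨I, B, hdisj, hI, hB, hAB, hIB⟩ := exists_disjoint_neighborSet_subset (m := n / 2 - 1)
    (k := s + 2) (fun v _ ↦ hD v) (by lia) (by rw [Fintype.card_fin]; lia)
  have hBA : (B : Set (Fin n))ᶜ ⊆ A := fun v hv ↦ by_contra fun hvA ↦ hv (hAB (mem_compl.2 hvA))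
  let H := (G.induce (B : Set (Fin n))ᶜ).spanningCoe
  have hdeg (v : Fin n) : (deg H v : ℝ) ≤ (1 - 2 * ε) * (n * p) := by
    refine le_trans ?_ hDε
    exact_mod_cast (deg_spanningCoe_induce_le_degInto hBA v).trans (hD v)
  have hisolated : ∀ v ∈ I ∪ B, deg H v = 0 := fun v hv ↦ deg_spanningCoe_induce_eq_zero <|
    (mem_union.1 hv).symm.imp (by simp) fun hvI ↦
      Set.disjoint_compl_right_iff_subset.2 (hIB v hvI)
  refine not_hasOptimalMatching_of_isVertexCover
    (isVertexCover_sdiff_spanningCoe_induce_compl G B) (by rw [Fintype.card_fin]; lia)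
    (hres H (G.spanningCoe_induce_le _) (chvatalFamily_of_deg_eq_zero hp hdeg hisolated ?_))
  rw [card_union_of_disjoint hdisj]
  lia

end ShiftedChvatal

section RandomGraph

open Finset

variable {n : ℕ} {p t a : ℝ}

open Classical in
lemma sum_prod_edgeFinset_mul_prod_sdiff [Fintype V] [DecidableEq V] {R : Type*} [CommSemiring R]
    (f g : Sym2 V → R) :
    ∑ G : SimpleGraph V, (∏ e ∈ G.edgeFinset, f e) *
        ∏ e ∈ (⊤ : SimpleGraph V).edgeFinset \ G.edgeFinset, g e =
      ∏ e ∈ (⊤ : SimpleGraph V).edgeFinset, (f e + g e) := by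
  rw [prod_add]
  refine sum_bij (fun G _ ↦ G.edgeFinset)
    (fun G _ ↦ mem_powerset.2 (SimpleGraph.edgeFinset_mono le_top))
    (fun _ _ _ _ h ↦ SimpleGraph.edgeFinset_inj.1 h) (fun S hS ↦ ?_) (fun _ _ ↦ rfl)
  refine ⟨SimpleGraph.fromEdgeSet S, mem_univ _, ?_⟩
  ext e
  have hdiag (he : e ∈ S) : ¬ e.IsDiag :=
    SimpleGraph.not_isDiag_of_mem_edgeSet _ (SimpleGraph.mem_edgeFinset.1 (mem_powerset.1 hS he))
  simpa using hdiag

open Classical in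
lemma weight_eq_pow_card_mul_pow_card_sdiff (p : ℝ) (G : SimpleGraph (Fin n)) :
    weight n p G = p ^ #G.edgeFinset *
      (1 - p) ^ #((⊤ : SimpleGraph (Fin n)).edgeFinset \ G.edgeFinset) := by
  rw [weight, card_sdiff_of_subset (SimpleGraph.edgeFinset_mono le_top),
    SimpleGraph.card_edgeFinset_top_eq_card_choose_two, Fintype.card_fin,
    ← SimpleGraph.coe_edgeFinset, Set.ncard_coe_finset]

lemma weight_nonneg (h0 : 0 ≤ p) (h1 : p ≤ 1) (G : SimpleGraph (Fin n)) : 0 ≤ weight n p G :=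
  mul_nonneg (pow_nonneg h0 _) (pow_nonneg (sub_nonneg.2 h1) _)

open Classical in
lemma sum_weight_mul_pow_card_inter {F : Finset (Sym2 (Fin n))}
    (hF : F ⊆ (⊤ : SimpleGraph (Fin n)).edgeFinset) (p x : ℝ) :
    ∑ G, weight n p G * x ^ #(G.edgeFinset ∩ F) = (1 + p * (x - 1)) ^ #F := by
  have hterm (G : SimpleGraph (Fin n)) : weight n p G * x ^ #(G.edgeFinset ∩ F) =
      (∏ e ∈ G.edgeFinset, p * (if e ∈ F then x else 1)) *
        ∏ _e ∈ (⊤ : SimpleGraph (Fin n)).edgeFinset \ G.edgeFinset, (1 - p) := by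
    rw [weight_eq_pow_card_mul_pow_card_sdiff, prod_mul_distrib, prod_ite_mem, prod_const,
      prod_const, prod_const]
    ring
  have hfactor (e : Sym2 (Fin n)) :
      p * (if e ∈ F then x else 1) + (1 - p) = if e ∈ F then 1 + p * (x - 1) else 1 := by
    split_ifs <;> ring
  simp_rw [hterm, sum_prod_edgeFinset_mul_prod_sdiff, hfactor]
  rw [prod_ite_mem, inter_eq_right.2 hF, prod_const]

lemma sum_weight (n : ℕ) (p : ℝ) : ∑ G, weight n p G = 1 := by
  simpa using sum_weight_mul_pow_card_inter (empty_subset _) p 1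

lemma pr_mono (h0 : 0 ≤ p) (h1 : p ≤ 1) {Q R : SimpleGraph (Fin n) → Prop}
    (h : ∀ G, Q G → R G) : Pr n p Q ≤ Pr n p R := by
  refine sum_le_sum fun G _ ↦ ?_
  have hw := weight_nonneg h0 h1 G
  have hG := h G
  split_ifs <;> tauto

lemma pr_not (p : ℝ) (Q : SimpleGraph (Fin n) → Prop) :
    Pr n p (fun G ↦ ¬ Q G) = 1 - Pr n p Q := by
  rw [eq_sub_iff_add_eq, ← sum_weight n p, Pr, Pr, ← sum_add_distrib]
  refine sum_congr rfl fun G _ ↦ ?_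
  by_cases hG : Q G <;> simp [hG]

lemma pr_le_sum_weight_mul (h0 : 0 ≤ p) (h1 : p ≤ 1) {Q : SimpleGraph (Fin n) → Prop}
    {f : SimpleGraph (Fin n) → ℝ} (hf : ∀ G, 0 ≤ f G) (hQ : ∀ G, Q G → 1 ≤ f G) :
    Pr n p Q ≤ ∑ G, weight n p G * f G := by
  refine sum_le_sum fun G _ ↦ ?_
  have hw := weight_nonneg h0 h1 G
  split_ifs with hG
  · exact le_mul_of_one_le_right hw (hQ G hG)
  · exact mul_nonneg hw (hf G)

lemma pr_exists_le_sum {ι : Type*} [Fintype ι] (h0 : 0 ≤ p) (h1 : p ≤ 1)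
    (Q : ι → SimpleGraph (Fin n) → Prop) :
    Pr n p (fun G ↦ ∃ i, Q i G) ≤ ∑ i, Pr n p (Q i) := by
  classical
  calc Pr n p (fun G ↦ ∃ i, Q i G)
      ≤ ∑ G, weight n p G * ∑ i, if Q i G then 1 else 0 := by
        refine pr_le_sum_weight_mul h0 h1 (fun G ↦ by positivity) fun G ⟨i, hi⟩ ↦ ?_
        simpa [hi] using single_le_sum (f := fun i ↦ if Q i G then (1 : ℝ) else 0)
          (fun j _ ↦ by positivity) (mem_univ i)
    _ = ∑ i, Pr n p (Q i) := by
        simp_rw [mul_sum, mul_ite, mul_one, mul_zero]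
        rw [sum_comm]
        simp [Pr]

open Classical in
lemma pr_lt_card_edgeFinset_inter_le (h0 : 0 ≤ p) (h1 : p ≤ 1) (ht : 0 ≤ t)
    {F : Finset (Sym2 (Fin n))} (hF : F ⊆ (⊤ : SimpleGraph (Fin n)).edgeFinset) :
    Pr n p (fun G ↦ a < #(G.edgeFinset ∩ F)) ≤ exp (#F * (p * (exp t - 1)) - t * a) := by
  have hmarkov (G : SimpleGraph (Fin n)) (hG : a < #(G.edgeFinset ∩ F)) :
      1 ≤ exp t ^ #(G.edgeFinset ∩ F) * exp (-(t * a)) := by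
    rw [← exp_nat_mul, ← exp_add]
    exact one_le_exp (by nlinarith)
  calc Pr n p (fun G ↦ a < #(G.edgeFinset ∩ F))
      ≤ ∑ G, weight n p G * (exp t ^ #(G.edgeFinset ∩ F) * exp (-(t * a))) :=
        pr_le_sum_weight_mul h0 h1 (fun G ↦ by positivity) hmarkov
    _ = (1 + p * (exp t - 1)) ^ #F * exp (-(t * a)) := by
        simp_rw [← mul_assoc, ← sum_mul]
        rw [sum_weight_mul_pow_card_inter hF]
    _ ≤ exp (p * (exp t - 1)) ^ #F * exp (-(t * a)) := by
        have : 0 ≤ p * (exp t - 1) := mul_nonneg h0 (sub_nonneg.2 (one_le_exp ht))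
        gcongr
        linarith [add_one_le_exp (p * (exp t - 1))]
    _ = exp (#F * (p * (exp t - 1)) - t * a) := by
        rw [← exp_nat_mul, ← exp_add, ← sub_eq_add_neg]

open Classical in
lemma degInto_eq_card_edgeFinset_inter [Fintype V] [DecidableEq V] (G : SimpleGraph V)
    (A : Finset V) (v : V) :
    degInto G A v = #(G.edgeFinset ∩ (A.erase v).image fun u ↦ s(v, u)) := by
  have himage : G.edgeFinset ∩ (A.erase v).image (fun u ↦ s(v, u)) =
      {u ∈ A | G.Adj v u}.image fun u ↦ s(v, u) := by
    ext e
    simp only [mem_inter, mem_image, mem_erase, mem_filter, SimpleGraph.mem_edgeFinset]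
    constructor
    · rintro ⟨hadj, u, ⟨-, hu⟩, rfl⟩
      exact ⟨u, ⟨hu, hadj⟩, rfl⟩
    · rintro ⟨u, ⟨hu, hadj⟩, rfl⟩
      exact ⟨hadj, u, ⟨hadj.ne', hu⟩, rfl⟩
  rw [himage, card_image_of_injective _ fun _ _ ↦ Sym2.congr_right.1, degInto]

lemma pr_lt_degInto_le (h0 : 0 ≤ p) (h1 : p ≤ 1) (ht : 0 ≤ t) (A : Finset (Fin n)) (v : Fin n) :
    Pr n p (fun G ↦ a < degInto G A v) ≤ exp (#A * (p * (exp t - 1)) - t * a) := by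
  classical
  have hF : (A.erase v).image (fun u ↦ s(v, u)) ⊆ (⊤ : SimpleGraph (Fin n)).edgeFinset := by
    simp only [image_subset_iff, mem_erase, SimpleGraph.mem_edgeFinset]
    exact fun u hu ↦ hu.1.symm
  have hcard : #((A.erase v).image fun u ↦ s(v, u)) ≤ #A :=
    card_image_le.trans card_erase_le
  have : 0 ≤ p * (exp t - 1) := mul_nonneg h0 (sub_nonneg.2 (one_le_exp ht))
  simp_rw [degInto_eq_card_edgeFinset_inter]
  refine (pr_lt_card_edgeFinset_inter_le h0 h1 ht hF).trans ?_
  gcongr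

lemma one_sub_le_pr_forall_degInto_le (h0 : 0 ≤ p) (h1 : p ≤ 1) (ht : 0 ≤ t)
    (A : Finset (Fin n)) :
    1 - n * exp (#A * (p * (exp t - 1)) - t * a) ≤
      Pr n p (fun G ↦ ∀ v, (degInto G A v : ℝ) ≤ a) := by
  have hunion : Pr n p (fun G ↦ ∃ v, a < degInto G A v) ≤
      n * exp (#A * (p * (exp t - 1)) - t * a) := by
    refine (pr_exists_le_sum h0 h1 _).trans ?_
    simpa using sum_le_card_nsmul univ _ _ fun v _ ↦ pr_lt_degInto_le (a := a) h0 h1 ht A v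
  have hnot := pr_not p fun G : SimpleGraph (Fin n) ↦ ∃ v, a < degInto G A v
  push Not at hnot
  linarith

lemma one_sub_inv_le_pr_forall_degInto_le (hn : 1 ≤ n) (hp : 10000 * log n ≤ n * p) (h1 : p ≤ 1)
    {A : Finset (Fin n)} (hA : (#A : ℝ) ≤ 0.951 * n) :
    1 - (n : ℝ)⁻¹ ≤ Pr n p (fun G ↦ ∀ v, (degInto G A v : ℝ) ≤ 0.98 * (n * p)) := by
  have hn0 : (0 : ℝ) < n := by exact_mod_cast hn
  have hlog : 0 ≤ log n := log_natCast_nonneg n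
  have h0 : 0 ≤ p := nonneg_of_mul_nonneg_right (by linarith) hn0
  have hexp : exp (1 / 60) - 1 ≤ 61 / 3600 := by
    have := abs_le.1 (abs_exp_sub_one_sub_id_le (x := 1 / 60) (by norm_num [abs_le]))
    linarith
  have hexp_nonneg : 0 ≤ p * (exp (1 / 60) - 1) :=
    mul_nonneg h0 (sub_nonneg.2 (one_le_exp (by norm_num)))
  have hexponent : #A * (p * (exp (1 / 60) - 1)) - 1 / 60 * (0.98 * (n * p)) ≤ -2 * log n :=
    calc #A * (p * (exp (1 / 60) - 1)) - 1 / 60 * (0.98 * (n * p))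
        ≤ 0.951 * n * (p * (61 / 3600)) - 1 / 60 * (0.98 * (n * p)) := by gcongr
      _ ≤ -2 * log n := by linarith
  have hfail : n * exp (#A * (p * (exp (1 / 60) - 1)) - 1 / 60 * (0.98 * (n * p))) ≤ (n : ℝ)⁻¹ :=
    calc n * exp (#A * (p * (exp (1 / 60) - 1)) - 1 / 60 * (0.98 * (n * p)))
        ≤ n * exp (-2 * log n) := by gcongr
      _ = (n : ℝ)⁻¹ := by
        rw [show -2 * log n = -log n + -log n by ring, exp_add, exp_neg, exp_log hn0,
          mul_inv_cancel_left₀ hn0.ne']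
  linarith [one_sub_le_pr_forall_degInto_le (t := 1 / 60) (a := 0.98 * (n * p)) h0 h1
    (by norm_num) A]

lemma add_ceil_add_two_mul_floor_add_one_le (hp : 10000 ≤ n * p) (hp' : p ≤ 1 / 25) :
    n / 20 + (⌈(3 * p)⁻¹⌉₊ + 2) * (⌊0.98 * (n * p)⌋₊ + 1) + 1 ≤ n / 2 := by
  have hn : (0 : ℝ) ≤ n := n.cast_nonneg
  have hp0 : 0 < p := pos_of_mul_pos_right (by linarith) hn
  have hnp : n * p ≤ n / 25 := by nlinarith
  have hshift : (⌈(3 * p)⁻¹⌉₊ : ℝ) ≤ (3 * p)⁻¹ + 1 := (Nat.ceil_lt_add_one (by positivity)).le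
  have hfloor : (⌊0.98 * (n * p)⌋₊ : ℝ) ≤ 0.98 * (n * p) := Nat.floor_le (by positivity)
  have hinv : (3 * p)⁻¹ ≤ n / 30000 := by
    rw [inv_le_iff_one_le_mul₀ (by positivity)]
    linarith
  have hmul : ((⌈(3 * p)⁻¹⌉₊ : ℝ) + 2) * (⌊0.98 * (n * p)⌋₊ + 1) ≤
      0.98 / 3 * n + 0.12 * n + n / 30000 + 3 :=
    calc ((⌈(3 * p)⁻¹⌉₊ : ℝ) + 2) * (⌊0.98 * (n * p)⌋₊ + 1)
        ≤ ((3 * p)⁻¹ + 1 + 2) * (0.98 * (n * p) + 1) := by gcongr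
      _ = 0.98 / 3 * n + 2.94 * (n * p) + (3 * p)⁻¹ + 3 := by field_simp; ring
      _ ≤ 0.98 / 3 * n + 0.12 * n + n / 30000 + 3 := by
        linarith
  have hdiv : ((n / 20 : ℕ) : ℝ) ≤ n / 20 := Nat.cast_div_le
  rw [Nat.le_div_iff_mul_le two_pos]
  have : (((n / 20 : ℕ) : ℝ) + (⌈(3 * p)⁻¹⌉₊ + 2) * (⌊0.98 * (n * p)⌋₊ + 1) + 1) * 2 ≤ n := by
    linarith
  exact_mod_cast this

end RandomGraph

lemma one_sub_inv_le_pr_not_chvatalResilient {n : ℕ} {p ε : ℝ} (hε : ε ≤ 1 / 100) (hn : 3 ≤ n)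
    (hp : 10000 * log n ≤ n * p) (hp' : p ≤ 1 / 25) :
    1 - (n : ℝ)⁻¹ ≤
      Pr n p fun G ↦ ¬ ChvatalResilient n p ε ⌈(3 * p)⁻¹⌉₊ HasOptimalMatching G := by
  have hn3 : (3 : ℝ) ≤ n := by exact_mod_cast hn
  have hlog : 1 ≤ log n := by
    rw [le_log_iff_exp_le (by linarith)]
    linarith [exp_one_lt_d9]
  have hp0 : 0 ≤ p := nonneg_of_mul_nonneg_right (by linarith) (by linarith : (0 : ℝ) < n)
  have hnp : n * p ≤ n / 25 := by nlinarith
  obtain ⟨A, -, hA⟩ := Finset.exists_subset_card_eq (s := (Finset.univ : Finset (Fin n)))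
    (n := n - n / 20) (by simp)
  have hcompl : Aᶜ.card = n / 20 := by
    rw [Finset.card_compl, Fintype.card_fin]
    lia
  have hAle : (A.card : ℝ) ≤ 0.951 * n := by
    have : (20 * A.card : ℝ) ≤ 19 * n + 19 := by exact_mod_cast (by lia : 20 * A.card ≤ 19 * n + 19)
    linarith
  refine (one_sub_inv_le_pr_forall_degInto_le (by lia) hp (by linarith) hAle).trans
    (pr_mono hp0 (by linarith) fun G hG ↦ ?_)
  refine not_chvatalResilient_of_degInto_le hp0 (fun v ↦ Nat.le_floor (hG v)) ?_
    (hcompl ▸ add_ceil_add_two_mul_floor_add_one_le (by linarith) hp')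
  calc (⌊0.98 * (n * p)⌋₊ : ℝ)
      ≤ 0.98 * (n * p) := Nat.floor_le (by positivity)
    _ ≤ (1 - 2 * ε) * (n * p) := by gcongr; linarith

theorem not_shifted_chvatal_resilient_optimal_matching_general :
    ∃ C : ℝ, 0 < C ∧ ∀ η : ℝ, 0 < η → ∃ N : ℕ, ∀ n : ℕ, N ≤ n →
      ∀ p : ℝ, C * log n / n ≤ p → p ≤ 1 / 25 → ∀ ε ≤ (1 / 100 : ℝ),
        1 - η ≤ Pr n p fun G ↦ ¬ ChvatalResilient n p ε ⌈(3 * p)⁻¹⌉₊ HasOptimalMatching G := by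
  refine ⟨10000, by norm_num, fun η hη ↦ ⟨max 3 ⌈η⁻¹⌉₊, fun n hn p hp hp' ε hε ↦ ?_⟩⟩
  have hn3 : 3 ≤ n := (le_max_left _ _).trans hn
  have hn0 : (0 : ℝ) < n := by exact_mod_cast (by lia : 0 < n)
  have hnη : (n : ℝ)⁻¹ ≤ η :=
    inv_le_of_inv_le₀ hη ((Nat.le_ceil _).trans (by exact_mod_cast (le_max_right _ _).trans hn))
  exact (sub_le_sub_left hnη 1).trans
    (one_sub_inv_le_pr_not_chvatalResilient hε hn3 ((div_le_iff₀' hn0).1 hp) hp')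

/-- Theorem 3.1.  For every `0 < ε < 10⁻⁶` there exists `C > 0` such
that, whenever `C log n / n ≤ p ≤ 1/25`, a.a.s. there is a subgraph
`H ∈ H^{ε,γ}_{n,p}(G_{n,p})` with `γ = ⌈(3p)⁻¹⌉/n` (so the index shift `γn` is
`⌈(3p)⁻¹⌉`) such that `G_{n,p} ∖ H` has no matching of size `⌊n/2⌋`. -/
theorem not_shifted_chvatal_resilient_optimal_matching (ε : ℝ) (hε : 0 < ε)
    (hε' : ε < 1/1000000) :
    ∃ C : ℝ, 0 < C ∧ ∀ η : ℝ, 0 < η → ∃ N : ℕ, ∀ n : ℕ, N ≤ n →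
      ∀ p : ℝ, C * Real.log n / n ≤ p → p ≤ 1/25 →
        1 - η ≤ Pr n p (fun G =>
          ∃ H : SimpleGraph (Fin n), H ≤ G ∧ ChvatalFamily n p ε ⌈(3 * p)⁻¹⌉₊ H ∧
            ∀ M : (G \ H).Subgraph, ¬ (M.IsMatching ∧ M.edgeSet.ncard = n / 2)) := by
  obtain ⟨C, hC, h⟩ := not_shifted_chvatal_resilient_optimal_matching_general
  refine ⟨C, hC, fun η hη ↦ (h η hη).imp fun N hN n hn p hp hp' ↦ ?_⟩
  simpa [ChvatalResilient, HasOptimalMatching] using hN n hn p hp hp' ε (by linarith)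

end Resilience
end

section
/- For every 0 < ε < 1 there exists C > 0 such that, for p ≥ C log n / n, the binomial random graph G = G_{n,p} asymptotically almost surely satisfies: for every H ∈ H^{ε,ε}_{n,p}(G) and G' := G ∖ H, and for every set X ⊆ V, we have |N_{G'}(X)| ≥ min{ ε|X|np/2, εn(log n)^{-1/4}/2 }. -/
/-!
Applied to the vertex of largest degree, the defining condition of `ChvatalFamily` bounds every
degree of `H` by `(1 - ε)np`: for large `n` its second alternative would make a degree negative.
So if all degrees of `G` are at least `(1 - ε/8)np`, then `X` sends total degree at least
`(7ε/8)np|X|` in `G' = G ∖ H`. All of it goes to `Y = N_{G'}(X)`. If `Y` were too small, then few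
edges of `G` would lie inside `X ∩ Y` and few would run from `X` to `Y ∖ X`, a contradiction.

That `G_{n,p}` has few edges of both kinds, simultaneously for all sets, follows from exponential
moments and union bounds. For the second kind, with `X` fixed, Chernoff's bound is applied with
`e^{-t} = min(|X|p, c)`, where `c = e^{-32/ε}`; the sum over `Y` then costs no more than the factor
`e^{|X|np}`. This gives expansion up to linear size `εcn/2`, more than enough since
`(log n)^{-1/4} ≤ c` eventually.
-/

open Filter Real

namespace Resilience

variable {V : Type*}

section RandomGraph

open MeasureTheory ProbabilityTheory SimpleGraph
open Fintype (card)

lemma integral_pow_ncard_inter_setBernoulli {ι : Type*} [Finite ι] (u F : Set ι)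
    (p : unitInterval) (a : ℝ) :
    ∫ s, a ^ (s ∩ F).ncard ∂setBer(u, p) = (1 - p + p * a) ^ (u ∩ F).ncard := by
  classical
  cases nonempty_fintype ι
  have pow_ncard (b : ℝ) (s : Set ι) :
      b ^ (s ∩ F).ncard = ∏ i, if i ∈ s ∧ i ∈ F then b else 1 := by
    rw [Finset.prod_ite, Finset.prod_const_one, mul_one, Finset.prod_const,
      ← Set.ncard_coe_finset, Finset.coe_filter_univ, Set.inter_def]
  have integral_coordinate (i : ι) :
      ∫ x, (if x ∧ i ∈ F then a else 1)
        ∂(unitInterval.toNNReal p • Measure.dirac (i ∈ u) +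
          unitInterval.toNNReal (unitInterval.symm p) • Measure.dirac False) =
      if i ∈ u ∧ i ∈ F then 1 - p + p * a else 1 := by
    rw [integral_add_measure .of_finite .of_finite]
    by_cases hi : i ∈ u ∧ i ∈ F <;> simp [hi, NNReal.smul_def, add_comm]
  rw [setBernoulli_eq_map, integral_map (by fun_prop) .of_discrete, Measure.infinitePi_eq_pi]
  simp_rw [pow_ncard, Set.mem_ofPred_eq, ← integral_coordinate]
  exact integral_fintype_prod_eq_prod fun i x ↦ if x ∧ i ∈ F then a else 1

section EdgeCounts

variable [Finite V]

instance : DiscreteMeasurableSpace (SimpleGraph V) :=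
  ⟨fun _ ↦ measurableEmbedding_edgeSet.measurableSet_image.1 .of_discrete⟩

lemma integral_pow_ncard_edgeSet_inter_binomialRandom (p : unitInterval) (F : Set (Sym2 V))
    (a : ℝ) :
    ∫ G, a ^ (G.edgeSet ∩ F).ncard ∂G(V, p) =
      (1 - p + p * a) ^ ((⊤ : SimpleGraph V).edgeSet ∩ F).ncard := by
  rw [binomialRandom_eq_map, integral_map (by fun_prop) .of_discrete]
  simp_rw [edgeSet_fromEdgeSet, Set.sdiff_eq, Set.inter_assoc]
  rw [integral_pow_ncard_inter_setBernoulli, ← Set.inter_assoc, Set.inter_self, edgeSet_top]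

lemma mgf_ncard_edgeSet_inter_binomialRandom_le (p : unitInterval) (F : Set (Sym2 V)) (t : ℝ) :
    mgf (fun G ↦ ((G.edgeSet ∩ F).ncard : ℝ)) G(V, p) t ≤
      exp (((⊤ : SimpleGraph V).edgeSet ∩ F).ncard * (p * (exp t - 1))) := by
  simp only [mgf, mul_comm t, exp_nat_mul]
  rw [integral_pow_ncard_edgeSet_inter_binomialRandom]
  have hp := p.2.1
  have hp' := p.2.2
  gcongr
  linarith [add_one_le_exp (p * (exp t - 1))]

lemma binomialRandom_real_le_ncard_edgeSet_inter_le (p : unitInterval) {F : Set (Sym2 V)} {t : ℝ}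
    (ht : 0 ≤ t) {m : ℝ} (hm : ((⊤ : SimpleGraph V).edgeSet ∩ F).ncard ≤ m) (k : ℝ) :
    G(V, p).real {G | k ≤ (G.edgeSet ∩ F).ncard} ≤ exp (m * (p * exp t) - t * k) := by
  refine (measure_ge_le_exp_mul_mgf k ht .of_finite).trans ?_
  rw [sub_eq_neg_add, exp_add, neg_mul]
  have hp := p.2.1
  gcongr
  refine (mgf_ncard_edgeSet_inter_binomialRandom_le p F t).trans (exp_le_exp.2 ?_)
  have hm₀ : 0 ≤ m := hm.trans' (Nat.cast_nonneg _)
  have : 0 ≤ p * (exp t - 1) := mul_nonneg hp (by linarith [one_le_exp ht])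
  gcongr
  exact sub_le_self _ (zero_le_one' ℝ)

lemma binomialRandom_real_ncard_edgeSet_inter_le_le (p : unitInterval) (F : Set (Sym2 V)) {t : ℝ}
    (ht : t ≤ 0) (k : ℝ) :
    G(V, p).real {G | (G.edgeSet ∩ F).ncard ≤ k} ≤
      exp (((⊤ : SimpleGraph V).edgeSet ∩ F).ncard * (p * (exp t - 1)) - t * k) := by
  refine (measure_le_le_exp_mul_mgf k ht .of_finite).trans ?_
  rw [sub_eq_neg_add, exp_add, neg_mul]
  gcongr
  exact mgf_ncard_edgeSet_inter_binomialRandom_le p F t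

end EdgeCounts

section Deterministic

lemma deg_eq_ncard_edgeSet_inter (G : SimpleGraph V) (v : V) :
    deg G v = (G.edgeSet ∩ {e | v ∈ e}).ncard := by
  classical
  exact (Nat.card_congr (G.incidenceSetEquivNeighborSet v)).symm

variable [Finite V] {G G' : SimpleGraph V}

lemma eBetween_le_mul (G : SimpleGraph V) (X Y : Set V) :
    eBetween G X Y ≤ X.ncard * Y.ncard := by
  rw [← Set.ncard_prod]
  refine (Set.ncard_le_ncard ?_).trans (Set.ncard_image_le (f := fun q : V × V ↦ s(q.1, q.2)))
  rintro _ ⟨-, x, hx, y, hy, rfl⟩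
  exact ⟨(x, y), ⟨hx, hy⟩, rfl⟩

lemma eIn_le_mul_self (G : SimpleGraph V) (A : Set V) : eIn G A ≤ A.ncard * A.ncard := by
  refine (Set.ncard_le_ncard fun e he ↦ ?_).trans (eBetween_le_mul G A A)
  induction e with | _ x y
  exact ⟨he.1, x, he.2 x (by simp), y, he.2 y (by simp), rfl⟩

lemma deg_top (v : V) : deg (⊤ : SimpleGraph V) v = Nat.card V - 1 := by
  rw [deg, neighborSet_top, Set.ncard_compl, Set.ncard_singleton]

lemma deg_le_deg_sdiff_add (G H : SimpleGraph V) (v : V) : deg G v ≤ deg (G \ H) v + deg H v := by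
  refine (Set.ncard_le_ncard fun w hw ↦ ?_).trans (Set.ncard_union_le _ _)
  by_cases h : H.Adj v w
  exacts [.inr h, .inl ⟨hw, h⟩]

lemma sum_deg_eq (G : SimpleGraph V) (X : Finset V) :
    ∑ v ∈ X, deg G v = eBetween G X (↑X)ᶜ + 2 * eIn G X := by
  classical
  cases nonempty_fintype V
  have card_endpoints : ∀ e ∈ G.edgeFinset, (X.bipartiteBelow (· ∈ ·) e).card =
      (if ∃ x ∈ X, ∃ y ∉ X, e = s(x, y) then 1 else 0) +
        2 * if ∀ v ∈ e, v ∈ X then 1 else 0 := by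
    refine Sym2.ind fun a b hab ↦ ?_
    have ne : a ≠ b := (mem_edgeFinset.1 hab).ne
    have bipartiteBelow_eq : X.bipartiteBelow (· ∈ ·) s(a, b) = {a, b} ∩ X := by
      ext v
      simp [Finset.bipartiteBelow, and_comm]
    have crosses_iff :
        (∃ x ∈ X, ∃ y ∉ X, s(a, b) = s(x, y)) ↔ a ∈ X ∧ b ∉ X ∨ b ∈ X ∧ a ∉ X := by
      grind [Sym2.eq_swap]
    simp only [bipartiteBelow_eq, crosses_iff, Sym2.ball]
    by_cases ha : a ∈ X <;> by_cases hb : b ∈ X <;>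
      simp [ha, hb, ne, Finset.insert_inter_of_mem, Finset.insert_inter_of_notMem]
  calc ∑ v ∈ X, deg G v = ∑ v ∈ X, (G.edgeFinset.bipartiteAbove (· ∈ ·) v).card := by
        simp only [deg_eq_ncard_edgeSet_inter, Finset.bipartiteAbove, ← Set.ncard_coe_finset,
          Finset.coe_filter, mem_edgeFinset, Set.inter_def, Set.mem_ofPred_eq]
    _ = ∑ e ∈ G.edgeFinset, (X.bipartiteBelow (· ∈ ·) e).card :=
        Finset.sum_card_bipartiteAbove_eq_sum_card_bipartiteBelow _
    _ = eBetween G X (↑X)ᶜ + 2 * eIn G X := by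
        rw [Finset.sum_congr rfl card_endpoints, Finset.sum_add_distrib, ← Finset.mul_sum,
          Finset.sum_boole, Finset.sum_boole]
        simp [eBetween, eIn, ← Set.ncard_coe_finset]

lemma eIn_le_eIn_inter_nbhd (h : G' ≤ G) (X : Set V) : eIn G' X ≤ eIn G (X ∩ nbhd G' X) := by
  refine Set.ncard_le_ncard <| Sym2.ind fun a b ⟨hab, hX⟩ ↦ ⟨edgeSet_mono h hab, ?_⟩
  have ha := hX a (by simp)
  have hb := hX b (by simp)
  simpa using ⟨⟨ha, b, hb, hab⟩, hb, a, ha, hab.symm⟩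

lemma eBetween_compl_le (h : G' ≤ G) (X : Set V) :
    eBetween G' X Xᶜ ≤ eBetween G X (nbhd G' X \ X) := by
  refine Set.ncard_le_ncard ?_
  rintro _ ⟨hxy, x, hx, y, hy, rfl⟩
  exact ⟨edgeSet_mono h hxy, x, hx, y, ⟨⟨x, hx, hxy.symm⟩, hy⟩, rfl⟩

lemma sum_deg_le_of_le (h : G' ≤ G) (X : Finset V) :
    ∑ v ∈ X, deg G' v ≤ eBetween G X (nbhd G' X \ X) + 2 * eIn G (X ∩ nbhd G' X) := by
  rw [sum_deg_eq]
  gcongr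
  exacts [eBetween_compl_le h X, eIn_le_eIn_inter_nbhd h X]

end Deterministic

/-- The pseudorandom properties of `G(V, p)`, for `d = |V| p`, that force expansion after the
deletion of a subgraph of maximum degree at most `(1 - ε) d`. -/
structure IsTypical [Fintype V] (ε c d : ℝ) (G : SimpleGraph V) : Prop where
  lt_deg (v : V) : (1 - ε / 8) * d < deg G v
  eIn_le (Z : Set V) : Z.ncard ≤ c * card V → eIn G Z ≤ ε / 16 * (Z.ncard * d)
  eBetween_lt (X Y : Set V) : Y.ncard < ε / 2 * min (X.ncard * d) (c * card V) →
    eBetween G X (Y \ X) < 3 * ε / 4 * (X.ncard * d)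

lemma IsTypical.min_le_ncard_nbhd_sdiff [Fintype V] {ε c d : ℝ} {G H : SimpleGraph V}
    (hG : IsTypical ε c d G) (hε : 0 < ε) (hε' : ε ≤ 2) (hH : ∀ v, deg H v ≤ (1 - ε) * d)
    (X : Set V) :
    ε / 2 * min (X.ncard * d) (c * card V) ≤ (nbhd (G \ H) X).ncard := by
  classical
  by_contra! hsmall
  set Y := nbhd (G \ H) X
  have sum_gt : X.ncard * (7 * ε / 8 * d) ≤ ∑ v ∈ X.toFinset, (deg (G \ H) v : ℝ) := by
    rw [Set.ncard_eq_toFinset_card', ← nsmul_eq_mul]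
    refine Finset.card_nsmul_le_sum _ _ _ fun v _ ↦ ?_
    have : (deg G v : ℝ) ≤ deg (G \ H) v + deg H v := mod_cast deg_le_deg_sdiff_add G H v
    linarith [hG.lt_deg v, hH v]
  have sum_le : ∑ v ∈ X.toFinset, (deg (G \ H) v : ℝ) ≤
      eBetween G X (Y \ X) + 2 * eIn G (X ∩ Y) := by
    have := sum_deg_le_of_le (sdiff_le : G \ H ≤ G) X.toFinset
    rw [Set.coe_toFinset] at this
    exact mod_cast this
  have inside : eIn G (X ∩ Y) ≤ ε / 16 * (X.ncard * d) := by
    have inter_le_left : ((X ∩ Y).ncard : ℝ) ≤ X.ncard :=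
      mod_cast Set.ncard_le_ncard Set.inter_subset_left
    have inter_le_right : ((X ∩ Y).ncard : ℝ) ≤ Y.ncard :=
      mod_cast Set.ncard_le_ncard Set.inter_subset_right
    have min_pos : 0 < min (X.ncard * d) (c * card V) :=
      pos_of_mul_pos_right (hsmall.trans_le' (Nat.cast_nonneg _)) (by positivity)
    have hd : 0 < d := pos_of_mul_pos_right (lt_min_iff.1 min_pos).1 (Nat.cast_nonneg _)
    have le_min : ε / 2 * min (X.ncard * d) (c * card V) ≤ c * card V :=
      (mul_le_of_le_one_left min_pos.le (by linarith)).trans (min_le_right _ _)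
    refine (hG.eIn_le _ (by linarith)).trans ?_
    gcongr
  linarith [hG.eBetween_lt X Y hsmall]

section Probability

lemma binomialRandom_real_le_eBetween_le [Finite V] (p : unitInterval) (X Y : Set V) {t : ℝ}
    (ht : 0 ≤ t) (k : ℝ) :
    G(V, p).real {G | k ≤ eBetween G X Y} ≤
      exp (X.ncard * Y.ncard * (p * exp t) - t * k) :=
  binomialRandom_real_le_ncard_edgeSet_inter_le p ht (mod_cast eBetween_le_mul ⊤ X Y) k

variable [Fintype V]

lemma binomialRandom_real_deg_le_le (p : unitInterval) (v : V) {δ : ℝ} (hδ : 0 ≤ δ) (hδ' : δ ≤ 1) :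
    G(V, p).real {G | (deg G v : ℝ) ≤ (1 - δ) * (card V * p)} ≤
      exp (1 - δ ^ 2 / 4 * (card V * p)) := by
  have chernoff := binomialRandom_real_ncard_edgeSet_inter_le_le p {e | v ∈ e}
    (t := -(δ / 2)) (by linarith) ((1 - δ) * (card V * p))
  simp only [← deg_eq_ncard_edgeSet_inter, deg_top, Nat.card_eq_fintype_card] at chernoff
  refine chernoff.trans (exp_le_exp.2 ?_)
  have : Nonempty V := ⟨v⟩
  rw [Nat.cast_pred Fintype.card_pos]
  have hn : (1 : ℝ) ≤ card V := mod_cast Fintype.card_pos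
  have hp := p.2.1
  have hp' := p.2.2
  have exp_le : exp (-(δ / 2)) - 1 ≤ -(δ / 2) + (δ / 2) ^ 2 := by
    have := abs_exp_sub_one_sub_id_le (abs_le.2 ⟨by linarith, by linarith⟩ : |-(δ / 2)| ≤ 1)
    linarith [le_of_abs_le this]
  have hnp : 0 ≤ (card V - 1) * (p : ℝ) := mul_nonneg (by linarith) hp
  nlinarith [mul_le_mul_of_nonneg_left exp_le hnp]

lemma binomialRandom_real_le_eIn_le (p : unitInterval) {Z : Set V} {t : ℝ} (ht : 0 ≤ t)
    (hZ : Z.ncard * exp t ≤ card V) (k : ℝ) :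
    G(V, p).real {G | k ≤ eIn G Z} ≤ exp (Z.ncard * (card V * p) - t * k) := by
  have hp := p.2.1
  refine (binomialRandom_real_le_ncard_edgeSet_inter_le p ht (m := Z.ncard * Z.ncard)
    (mod_cast eIn_le_mul_self ⊤ Z) k).trans (exp_le_exp.2 (sub_le_sub_right ?_ _))
  calc _ = Z.ncard * (Z.ncard * exp t * p) := by ring
    _ ≤ Z.ncard * (card V * p) := by gcongr

lemma sum_pow_ncard (q : ℝ) : ∑ X : Set V, q ^ X.ncard = (1 + q) ^ card V := by
  classical
  have := Fintype.sum_pow_mul_eq_add_pow V q 1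
  simp only [one_pow, mul_one] at this
  rw [add_comm, ← this]
  exact (Fintype.sum_equiv Fintype.finsetEquivSet _ _ fun X ↦ by simp).symm

lemma measureReal_exists_set_le {Ω : Type*} [MeasurableSpace Ω] (μ : Measure Ω) [IsFiniteMeasure μ]
    {Q : Set V → Ω → Prop} {q : ℝ} (h₀ : ∀ ω, ¬ Q ∅ ω)
    (hQ : ∀ X : Set V, X.Nonempty → μ.real {ω | Q X ω} ≤ q ^ X.ncard) :
    μ.real {ω | ∃ X, Q X ω} ≤ (1 + q) ^ card V - 1 := by
  classical
  rw [Set.ofPred_exists]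
  refine (measureReal_iUnion_fintype_le _).trans ?_
  have sum_nonempty :
      ∑ X ∈ Finset.univ.erase (∅ : Set V), q ^ X.ncard = (1 + q) ^ card V - 1 := by
    rw [Finset.sum_erase_eq_sub (Finset.mem_univ _), sum_pow_ncard, Set.ncard_empty, pow_zero]
  rw [← Finset.sum_erase _ (a := ∅) (by simp [h₀]), ← sum_nonempty]
  exact Finset.sum_le_sum fun X hX ↦
    hQ X (Set.nonempty_iff_ne_empty.2 (Finset.ne_of_mem_erase hX))

lemma binomialRandom_real_exists_le_eBetween_sdiff_le (p : unitInterval) (X : Set V) {t m : ℝ}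
    (ht : 0 ≤ t) (k : ℝ) :
    G(V, p).real {G | ∃ Y : Set V, Y.ncard ≤ m ∧ k ≤ eBetween G X (Y \ X)} ≤
      exp (card V * exp (-t) + X.ncard * m * (p * exp t) + t * (m - k)) := by
  have hp := p.2.1
  -- Since `|Y| ≤ m`, inserting `exp (t * (m - |Y|)) ≥ 1` costs a factor that no longer depends on
  -- `Y` and leaves weights `exp (-t) ^ |Y|`, whose sum over all `Y` is a binomial expansion.
  have real_le (Y : Set V) : G(V, p).real {G | Y.ncard ≤ m ∧ k ≤ eBetween G X (Y \ X)} ≤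
      exp (X.ncard * m * (p * exp t) + t * (m - k)) * exp (-t) ^ Y.ncard := by
    rw [← exp_nat_mul, ← exp_add]
    by_cases hY : Y.ncard ≤ m
    · have hYX : ((Y \ X).ncard : ℝ) ≤ Y.ncard := mod_cast Set.ncard_le_ncard Set.sdiff_subset
      simp only [hY, true_and]
      refine (binomialRandom_real_le_eBetween_le p X (Y \ X) ht k).trans (exp_le_exp.2 ?_)
      have : 0 ≤ t * (m - Y.ncard) := mul_nonneg ht (sub_nonneg.2 hY)
      grw [hYX, hY]
      linarith
    · simp only [hY, false_and, Set.ofPred_false, measureReal_empty]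
      positivity
  rw [Set.ofPred_exists]
  calc _ ≤ ∑ Y : Set V, G(V, p).real {G | Y.ncard ≤ m ∧ k ≤ eBetween G X (Y \ X)} :=
        measureReal_iUnion_fintype_le _
    _ ≤ exp (X.ncard * m * (p * exp t) + t * (m - k)) * (1 + exp (-t)) ^ card V := by
        rw [← sum_pow_ncard, Finset.mul_sum]
        exact Finset.sum_le_sum fun Y _ ↦ real_le Y
    _ ≤ exp (X.ncard * m * (p * exp t) + t * (m - k)) * exp (exp (-t)) ^ card V := by
        gcongr
        rw [add_comm]
        exact add_one_le_exp _
    _ = _ := by rw [← exp_nat_mul, ← exp_add]; congr 1; ring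

lemma one_add_exp_neg_pow_sub_one_le {n : ℕ} {d : ℝ} (hn : 1 ≤ n) (hd : 2 * log n ≤ d) :
    (1 + exp (-d)) ^ n - 1 ≤ 2 / n := by
  have hn' : (1 : ℝ) ≤ n := mod_cast hn
  have hn₀ : (0 : ℝ) < n := by linarith
  have exp_le : exp (-d) ≤ 1 / n / n := by
    calc exp (-d) ≤ exp (-log n - log n) := exp_le_exp.2 (by linarith)
      _ = 1 / n / n := by rw [exp_sub, exp_neg, exp_log hn₀, one_div]
  have exp_inv_le : exp (1 / n) ≤ 1 + 2 / n := by
    have inv_le : 1 / (n : ℝ) ≤ 1 := div_le_one_of_le₀ hn' hn₀.le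
    have inv_nonneg : 0 ≤ 1 / (n : ℝ) := by positivity
    have := le_of_abs_le
      (abs_exp_sub_one_sub_id_le (x := 1 / n) (by rwa [abs_of_nonneg inv_nonneg]))
    have two_div : 2 / (n : ℝ) = 1 / n + 1 / n := by ring
    nlinarith
  calc (1 + exp (-d)) ^ n - 1 ≤ exp (1 / n / n) ^ n - 1 := by
        gcongr
        linarith [add_one_le_exp (1 / n / n : ℝ)]
    _ = exp (1 / n) - 1 := by rw [← exp_nat_mul, mul_div_cancel₀ _ hn₀.ne']
    _ ≤ 2 / n := by linarith

variable {ε : ℝ} {p : unitInterval}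

lemma binomialRandom_real_exists_deg_le_le (hε : 0 < ε) (hε' : ε ≤ 1) (hV : 1 ≤ card V)
    (hp : 512 / ε ^ 2 * log (card V) ≤ card V * p) :
    G(V, p).real {G | ∃ v, (deg G v : ℝ) ≤ (1 - ε / 8) * (card V * p)} ≤ 3 / card V := by
  have hn : (0 : ℝ) < card V := mod_cast hV
  have two_log_le : 2 * log (card V) ≤ (ε / 8) ^ 2 / 4 * (card V * p) := by
    calc 2 * log (card V) = (ε / 8) ^ 2 / 4 * (512 / ε ^ 2 * log (card V)) := by
          field_simp
          ring
      _ ≤ (ε / 8) ^ 2 / 4 * (card V * p) := by gcongr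
  rw [Set.ofPred_exists]
  calc _ ≤ ∑ v : V, G(V, p).real {G | (deg G v : ℝ) ≤ (1 - ε / 8) * (card V * p)} :=
        measureReal_iUnion_fintype_le _
    _ ≤ ∑ _v : V, exp (1 - 2 * log (card V)) := by
        gcongr with v
        exact (binomialRandom_real_deg_le_le p v (by linarith) (by linarith)).trans
          (exp_le_exp.2 (by linarith))
    _ = exp 1 / card V := by
        rw [Finset.sum_const, Finset.card_univ, nsmul_eq_mul, two_mul, exp_sub, exp_add, exp_log hn]
        field_simp
    _ ≤ 3 / card V := by gcongr; exact exp_one_lt_three.le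

lemma binomialRandom_real_exists_lt_eIn_le (hε : 0 < ε) (hV : 1 ≤ card V)
    (hp : 2 * log (card V) ≤ card V * p) :
    G(V, p).real {G | ∃ Z : Set V, Z.ncard ≤ exp (-(32 / ε)) * card V ∧
      ε / 16 * (Z.ncard * (card V * p)) < eIn G Z} ≤ 2 / card V := by
  refine (measureReal_exists_set_le _ (q := exp (-(card V * p))) (fun G h ↦ ?_) fun Z _ ↦ ?_).trans
    (one_add_exp_neg_pow_sub_one_le hV hp)
  · have := eIn_le_mul_self G ∅
    simp_all
  rw [← exp_nat_mul]
  by_cases hZ : Z.ncard ≤ exp (-(32 / ε)) * card V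
  · have hZ' : Z.ncard * exp (32 / ε) ≤ card V := by
      rwa [exp_neg, ← div_eq_inv_mul, le_div_iff₀ (exp_pos _)] at hZ
    calc _ ≤ G(V, p).real {G | ε / 16 * (Z.ncard * (card V * p)) ≤ eIn G Z} :=
          measureReal_mono fun G h ↦ h.2.le
      _ ≤ exp (Z.ncard * (card V * p) - 32 / ε * (ε / 16 * (Z.ncard * (card V * p)))) :=
          binomialRandom_real_le_eIn_le p (by positivity) hZ' _
      _ = exp (Z.ncard * -(card V * p)) := by congr 1; field_simp; ring
  · simp only [hZ, false_and, Set.ofPred_false, measureReal_empty]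
    positivity

lemma binomialRandom_real_exists_le_eBetween_sdiff_le_exp (hε : 0 < ε) (hε' : ε ≤ 1)
    (hp₀ : 0 < (p : ℝ)) {c : ℝ} (hc : 0 < c) (hcε : c ≤ exp (-(32 / ε))) {X : Set V}
    (hX : X.Nonempty) :
    G(V, p).real {G | ∃ Y : Set V,
      Y.ncard ≤ ε / 2 * min (X.ncard * (card V * (p : ℝ))) (c * card V) ∧
      3 * ε / 4 * (X.ncard * (card V * p)) ≤ eBetween G X (Y \ X)} ≤
        exp (X.ncard * -(card V * p)) := by
  have hx : (0 : ℝ) < X.ncard := mod_cast hX.ncard_pos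
  -- With `exp (-t) = q` and `T = |X| n p`, the first two terms of the exponent in the union bound
  -- over `Y` are `O(T)`, while the third is at most `-t * (ε / 4 * T)` and `t ≥ 32 / ε`.
  set q : ℝ := min (X.ncard * (p : ℝ)) c
  have hq : 0 < q := lt_min (by positivity) hc
  have le_neg_log : 32 / ε ≤ -log q := by
    rw [le_neg, log_le_iff_le_exp hq]
    exact (min_le_right _ _).trans hcε
  have min_eq : min (X.ncard * (card V * (p : ℝ))) (c * card V) = card V * q := by
    rw [mul_min_of_nonneg _ _ (Nat.cast_nonneg _), mul_left_comm, mul_comm c]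
  rw [min_eq]
  refine (binomialRandom_real_exists_le_eBetween_sdiff_le p X (t := -log q)
    (le_neg_log.trans' (by positivity)) _).trans (exp_le_exp.2 ?_)
  rw [neg_neg, exp_neg, exp_log hq]
  set T : ℝ := X.ncard * (card V * p)
  have hT : 0 ≤ T := by positivity
  have le_T : card V * q ≤ T := by rw [← min_eq]; exact min_le_left _ _
  calc card V * q + X.ncard * (ε / 2 * (card V * q)) * (p * q⁻¹)
        + -log q * (ε / 2 * (card V * q) - 3 * ε / 4 * T)
      = card V * q + ε / 2 * T + -log q * (ε / 2 * (card V * q) - 3 * ε / 4 * T) := by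
        simp only [T]; field_simp
    _ ≤ T + 1 / 2 * T + 32 / ε * (-(ε / 4 * T)) := by
        have : -log q * (ε / 2 * (card V * q) - 3 * ε / 4 * T) ≤ 32 / ε * (-(ε / 4 * T)) := by
          refine (mul_le_mul_of_nonneg_left ?_ (le_neg_log.trans' (by positivity))).trans
            (mul_le_mul_of_nonpos_right le_neg_log ?_)
          · nlinarith
          · rw [neg_nonpos]; positivity
        gcongr
    _ = -(13 / 2) * T := by field_simp; ring
    _ ≤ X.ncard * -(card V * p) := by linarith [mul_neg (X.ncard : ℝ) (card V * p)]

lemma binomialRandom_real_exists_lt_min_le_eBetween_sdiff_le (hε : 0 < ε) (hε' : ε ≤ 1)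
    (hV : 1 ≤ card V) (hp₀ : 0 < (p : ℝ)) (hp : 2 * log (card V) ≤ card V * p) :
    G(V, p).real {G | ∃ X Y : Set V,
      Y.ncard < ε / 2 * min (X.ncard * (card V * (p : ℝ))) (exp (-(32 / ε)) * card V) ∧
      3 * ε / 4 * (X.ncard * (card V * p)) ≤ eBetween G X (Y \ X)} ≤ 2 / card V := by
  refine (measureReal_exists_set_le _ (q := exp (-(card V * p))) (fun G ↦ ?_) fun X hX ↦ ?_).trans
    (one_add_exp_neg_pow_sub_one_le hV hp)
  · rintro ⟨Y, hY, -⟩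
    rw [Set.ncard_empty, Nat.cast_zero, zero_mul, min_eq_left (by positivity), mul_zero] at hY
    exact hY.not_ge (Nat.cast_nonneg _)
  rw [← exp_nat_mul]
  refine (measureReal_mono ?_).trans
    (binomialRandom_real_exists_le_eBetween_sdiff_le_exp hε hε' hp₀ (exp_pos _) le_rfl hX)
  exact fun G ⟨Y, hY, h⟩ ↦ ⟨Y, hY.le, h⟩

lemma one_sub_le_binomialRandom_real_isTypical (hε : 0 < ε) (hε' : ε ≤ 1)
    (hV : 2 ≤ card V) (hp : 512 / ε ^ 2 * log (card V) ≤ card V * p) :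
    1 - 7 / card V ≤
      G(V, p).real {G | IsTypical ε (exp (-(32 / ε))) (card V * p) G} := by
  have hn : (2 : ℝ) ≤ card V := mod_cast hV
  have hV' : 1 ≤ card V := by lia
  have hlog : 0 < log (card V) := log_pos (by linarith)
  have hp₂ : 2 * log (card V) ≤ card V * p := by
    refine hp.trans' (mul_le_mul_of_nonneg_right ?_ hlog.le)
    rw [le_div_iff₀ (by positivity)]
    nlinarith
  have hp₀ : 0 < (p : ℝ) := by
    refine pos_of_mul_pos_right (hp₂.trans_lt' ?_) (Nat.cast_nonneg _)
    positivity
  have fails_le : G(V, p).real {G | IsTypical ε (exp (-(32 / ε))) (card V * p) G}ᶜ ≤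
      3 / card V + (2 / card V + 2 / card V) := by
    refine (measureReal_mono fun G hG ↦ ?_).trans <| (measureReal_union_le _ _).trans <|
      add_le_add (binomialRandom_real_exists_deg_le_le hε hε' hV' hp) <|
      (measureReal_union_le _ _).trans <|
      add_le_add (binomialRandom_real_exists_lt_eIn_le hε hV' hp₂)
        (binomialRandom_real_exists_lt_min_le_eBetween_sdiff_le hε hε' hV' hp₀ hp₂)
    by_contra h
    exact hG ⟨fun v ↦ not_le.1 fun hv ↦ h (.inl ⟨v, hv⟩),
      fun Z hZ ↦ not_lt.1 fun hZ' ↦ h (.inr (.inl ⟨Z, hZ, hZ'⟩)),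
      fun X Y hY ↦ not_le.1 fun hXY ↦ h (.inr (.inr ⟨X, Y, hY, hXY⟩))⟩
  rw [probReal_compl_eq_one_sub .of_discrete] at fails_le
  have : (7 : ℝ) / card V = 3 / card V + (2 / card V + 2 / card V) := by ring
  linarith

end Probability

lemma Pr_eq_binomialRandom_real (n : ℕ) (p : unitInterval) (Q : SimpleGraph (Fin n) → Prop) :
    Pr n p Q = G(Fin n, p).real {G | Q G} := by
  classical
  have singleton (G : SimpleGraph (Fin n)) : weight n p G = G(Fin n, p).real {G} := by
    rw [measureReal_def, binomialRandom_singleton, weight]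
    simp
  simp only [Pr, singleton, ← Finset.sum_filter, sum_measureReal_singleton, Finset.coe_filter_univ]

lemma Pr_mono {n : ℕ} {p : ℝ} (hp₀ : 0 ≤ p) (hp₁ : p ≤ 1) {Q Q' : SimpleGraph (Fin n) → Prop}
    (h : ∀ G, Q G → Q' G) : Pr n p Q ≤ Pr n p Q' := by
  lift p to unitInterval using ⟨hp₀, hp₁⟩
  rw [Pr_eq_binomialRandom_real, Pr_eq_binomialRandom_real]
  exact measureReal_mono h

lemma eventually_log_rpow_neg_le {a c : ℝ} (ha : 0 < a) (hc : 0 < c) :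
    ∀ᶠ n : ℕ in atTop, log n ^ (-a) ≤ c :=
  (((tendsto_rpow_neg_atTop ha).comp tendsto_log_atTop).comp
    tendsto_natCast_atTop_atTop).eventually_le_const hc

lemma ChvatalFamily.deg_le {n s : ℕ} {p ε : ℝ} {H : SimpleGraph (Fin n)}
    (hH : ChvatalFamily n p ε s H) (hn : 3 ≤ n) (hp : 0 < p) (hεn : 1 < ε * n) (u : Fin n) :
    deg H u ≤ (1 - ε) * (n * p) := by
  obtain ⟨v, hv, v_anti, hdeg⟩ := hH
  obtain ⟨i, rfl⟩ := hv.surjective u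
  let first : Fin n := ⟨0, by lia⟩
  have hn' : (3 : ℝ) ≤ n := mod_cast hn
  have deg_le_first : (deg H (v i) : ℝ) ≤ deg H (v first) :=
    mod_cast v_anti first i i.1.zero_le
  obtain deg_first_le | deg_shifted_le := hdeg first (by simp only [first]; linarith)
  · simp only [first, Nat.cast_zero, zero_add] at deg_le_first deg_first_le
    linarith
  · have rhs_neg : (((first : ℕ) : ℝ) + 1) * p - ε * n * p < 0 := by
      simp only [first, Nat.cast_zero, zero_add]
      nlinarith
    exact absurd (deg_shifted_le.trans_lt rhs_neg) (Nat.cast_nonneg _).not_gt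

lemma eventually_deg_le_of_chvatalFamily {ε C : ℝ} (hε : 0 < ε) (hC : 0 < C) :
    ∀ᶠ n : ℕ in atTop, ∀ p : ℝ, C * log n / n ≤ p → ∀ s H, ChvatalFamily n p ε s H →
      ∀ v, deg H v ≤ (1 - ε) * (n * p) := by
  filter_upwards [eventually_ge_atTop 3,
    (tendsto_natCast_atTop_atTop.const_mul_atTop hε).eventually_gt_atTop 1]
    with n hn hεn p hp s H hH
  have : (1 : ℝ) < n := mod_cast (by lia : 1 < n)
  refine hH.deg_le hn (hp.trans_lt' ?_) hεn
  have := log_pos this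
  positivity

theorem neighbourhood_expansion_general (ε : ℝ) (hε : 0 < ε) (hε1 : ε ≤ 1) :
    ∃ C : ℝ, 0 < C ∧ ∃ c : ℝ, 0 < c ∧ ∀ η : ℝ, 0 < η → ∀ᶠ n : ℕ in atTop,
      ∀ p : ℝ, C * Real.log n / n ≤ p → p ≤ 1 →
        1 - η ≤ Pr n p (fun G =>
          ∀ H : SimpleGraph (Fin n), (∀ v, deg H v ≤ (1 - ε) * (n * p)) →
            ∀ X : Set (Fin n),
              min (ε * X.ncard * n * p / 2) (ε * n * c / 2) ≤ ((nbhd (G \ H) X).ncard : ℝ)) := by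
  refine ⟨512 / ε ^ 2, by positivity, exp (-(32 / ε)), exp_pos _, fun η hη ↦ ?_⟩
  filter_upwards [eventually_ge_atTop 2,
    (tendsto_const_div_atTop_nhds_zero_nat 7).eventually_le_const hη] with n hn hnη p hp hp1
  lift p to unitInterval using ⟨hp.trans' (by positivity), hp1⟩
  rw [div_le_iff₀' (by positivity)] at hp
  have typical := one_sub_le_binomialRandom_real_isTypical (V := Fin n) (p := p) hε hε1
    (by simpa) (by simpa)
  rw [Pr_eq_binomialRandom_real]
  simp only [Fintype.card_fin] at typical
  refine (typical.trans' (by linarith)).trans <| measureReal_mono fun G hG H hH X ↦ ?_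
  refine (hG.min_le_ncard_nbhd_sdiff hε (by linarith) hH X).trans' (le_of_eq ?_)
  rw [mul_min_of_nonneg _ _ (by positivity), Fintype.card_fin]
  congr 1 <;> ring

end RandomGraph

/-- Proposition 2.5(i).  For every `0 < ε < 1` there exists `C > 0`
such that, for `p ≥ C log n / n`, a.a.s. for every `H ∈ H^{ε,ε}_{n,p}(G)` and every
`X ⊆ V` we have `|N_{G∖H}(X)| ≥ min{ε|X|np/2, εn(log n)^{-1/4}/2}`. -/
theorem neighbourhood_expansion (ε : ℝ) (hε : 0 < ε) (hε1 : ε < 1) :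
    ∃ C : ℝ, 0 < C ∧ ∀ η : ℝ, 0 < η → ∃ N : ℕ, ∀ n : ℕ, N ≤ n →
      ∀ p : ℝ, C * Real.log n / n ≤ p → p ≤ 1 →
        1 - η ≤ Pr n p (fun G =>
          ∀ H : SimpleGraph (Fin n), H ≤ G → ChvatalFamily n p ε ⌈ε * n⌉₊ H →
            ∀ X : Set (Fin n),
              min (ε * X.ncard * n * p / 2) (ε * n * Real.log n ^ (-(1/4) : ℝ) / 2)
                ≤ ((nbhd (G \ H) X).ncard : ℝ)) := by
  obtain ⟨C, hC, c, hc, expansion⟩ := neighbourhood_expansion_general ε hε hε1.le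
  refine ⟨C, hC, fun η hη ↦ eventually_atTop.1 ?_⟩
  filter_upwards [expansion η hη, eventually_deg_le_of_chvatalFamily hε hC,
    eventually_log_rpow_neg_le (a := 1 / 4) (by norm_num) hc] with n hn deg_le log_le p hp hp1
  refine (hn p hp hp1).trans (Pr_mono (hp.trans' (by positivity)) hp1 fun G hG H _ hH X ↦ ?_)
  refine (min_le_min_left _ ?_).trans (hG H (deg_le p hp _ H hH) X)
  gcongr

end Resilience
end
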